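/- The map U (the μ-a.e. limit of the Chacon-type maps U_n) is weakly mixing: for all Borel sets A, B ⊆ T², lim_{n→∞} (1/n) ∑_{j=0}^{n−1} [μ(U^{−j}(A) ∩ B) − μ(A)μ(B)]² = 0. -/

import Mathlib

open MeasureTheory Filter Set

noncomputable section

instance fact01 : Fact ((0:ℝ) < 1) := ⟨one_pos⟩

/-- The two-dimensional torus `[0,1)²` with coordinatewise addition mod 1. -/
abbrev T2 : Type := AddCircle (1:ℝ) × AddCircle (1:ℝ)

/-- The canonical representative in `[0,1)` of a point of the circle. -/
noncomputable def rep (x : AddCircle (1:ℝ)) : ℝ := ((AddCircle.equivIco 1 0) x : ℝ)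

/-- The point of the torus with coordinates `a`, `b` (mod 1). -/
noncomputable def tv (a b : ℝ) : T2 := ((a : AddCircle (1:ℝ)), (b : AddCircle (1:ℝ)))

open Classical in
/-- The Chacon-type maps `U_n` on the torus. -/
noncomputable def chaconU : ℕ → T2 → T2
  | 0 => id
  | 1 => fun x =>
      if 0 ≤ rep x.1 ∧ rep x.1 < 1/2 ∧ 1/2 ≤ rep x.2 ∧ rep x.2 < 1 then x + tv (1/2) 0
      else if 1/2 ≤ rep x.1 ∧ rep x.1 < 1 ∧ 1/2 ≤ rep x.2 ∧ rep x.2 < 1 then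
        x + tv (-(1/2)) (-(1/2))
      else if 0 ≤ rep x.1 ∧ rep x.1 < 1/2 ∧ 0 ≤ rep x.2 ∧ rep x.2 < 1/2 then x + tv 0 (1/2)
      else x
  | (n+2) => fun x =>
      let s : ℝ := 1 / 2 ^ (n+2)
      let a := rep x.1
      let b := rep x.2
      if 1-4*s ≤ a ∧ a < 1-3*s ∧ s ≤ b ∧ b < 2*s then x + tv (5*s-1) (1-2*s)
      else if 1-3*s ≤ a ∧ a < 1-2*s ∧ s ≤ b ∧ b < 2*s then x + tv s 0
      else if 1-4*s ≤ a ∧ a < 1-3*s ∧ 0 ≤ b ∧ b < s then x + tv (3*s) s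
      else if 1-3*s ≤ a ∧ a < 1-2*s ∧ 0 ≤ b ∧ b < s then x + tv s 0
      else if 1-2*s ≤ a ∧ a < 1 ∧ s ≤ b ∧ b < 2*s then x + tv (2*s-1) (1-3*s)
      else if 1-2*s ≤ a ∧ a < 1-s ∧ 0 ≤ b ∧ b < s then x + tv (2*s-1) (1-s)
      else if 1-s ≤ a ∧ a < 1 ∧ 0 ≤ b ∧ b < s then x
      else chaconU (n+1) x

/-- An automorphism of the torus: measurable, bijective up to null sets with measurable
inverse, and measure-preserving. -/
def IsAutomorphism (U : T2 → T2) : Prop :=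
  Measurable U ∧ ∃ V : T2 → T2, Measurable V ∧
    (∀ᵐ x ∂(volume : Measure T2), V (U x) = x) ∧
    (∀ᵐ x ∂(volume : Measure T2), U (V x) = x) ∧
    ∀ A : Set T2, MeasurableSet A → volume (U ⁻¹' A) = volume A

/-!
Cutting and stacking: the dyadic squares of side `2⁻ⁿ`, except for one in a corner, form a tower of
height `4ⁿ - 1` up which `U` moves, and the tower of stage `n + 1` consists of four copies of the
tower of stage `n` (cut into quarter columns) stacked with three spacers.

Let `E` be invariant under `U × U` and let `h` be the height of stage `n`. The second copy follows
the first one directly, while the third one is delayed by a spacer. Hence `(U × U)^h` moves a fixed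
proportion of a product `Iᵢ × Iⱼ₊₁` of levels to `Iᵢ × Iⱼ`, so `E` cannot nearly fill one and nearly
miss the other. As `E` nearly fills or nearly misses most products of levels, `E` is invariant under
`id × U`, and then under `U × id`. So all products of levels of a stage carry the same mass of `E`,
which forces `E` to be null or conull. Thus `U × U` is ergodic, and the mean ergodic theorem for
`U × U` gives the convergence of the averages of `μ(U⁻ʲA ∩ B)` and of their squares.
-/

section Partition

variable {Y ι : Type*} [MeasurableSpace Y] {ν : Measure Y} {s : Finset ι} {R : ι → Set Y}

lemma sum_measureReal_inter_le [IsFiniteMeasure ν] (hR : ∀ p ∈ s, MeasurableSet (R p))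
    (hd : (s : Set ι).PairwiseDisjoint R) (D : Set Y) :
    ∑ p ∈ s, ν.real (D ∩ R p) ≤ ν.real D := by
  have h := sum_measureReal_le_measureReal_univ (μ := ν.restrict D) hR hd
  rw [measureReal_restrict_apply_univ] at h
  refine (Finset.sum_congr rfl fun p hp => ?_).trans_le h
  rw [measureReal_restrict_apply (hR p hp), inter_comm]

lemma measureReal_le_sum_inter_add [IsProbabilityMeasure ν] (hR : ∀ p ∈ s, MeasurableSet (R p))
    (hd : (s : Set ι).PairwiseDisjoint R) (D : Set Y) :
    ν.real D ≤ ∑ p ∈ s, ν.real (D ∩ R p) + (1 - ∑ p ∈ s, ν.real (R p)) := by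
  have hU : MeasurableSet (⋃ p ∈ s, R p) := s.measurableSet_biUnion hR
  rw [← measureReal_biUnion_finset hd hR, ← probReal_compl_eq_one_sub hU,
    ← measureReal_inter_add_sdiff (s := D) hU, inter_iUnion₂]
  exact add_le_add (measureReal_biUnion_finset_le s fun p => D ∩ R p)
    (measureReal_mono (sdiff_subset_compl D _))

lemma sum_min_measureReal_inter_le [IsFiniteMeasure ν] (hR : ∀ p ∈ s, MeasurableSet (R p))
    (hd : (s : Set ι).PairwiseDisjoint R) {E' : Set Y}
    (hE' : ∀ p ∈ s, R p ⊆ E' ∨ Disjoint (R p) E') (E : Set Y) :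
    ∑ p ∈ s, min (ν.real (E ∩ R p)) (ν.real (Eᶜ ∩ R p)) ≤ ν.real (symmDiff E E') := by
  refine (Finset.sum_le_sum fun p hp => ?_).trans (sum_measureReal_inter_le hR hd _)
  rcases hE' p hp with h | h
  · exact min_le_of_right_le (measureReal_mono fun z hz => ⟨.inr ⟨h hz.2, hz.1⟩, hz.2⟩)
  · exact min_le_of_left_le (measureReal_mono fun z hz =>
      ⟨.inl ⟨hz.1, disjoint_left.1 h hz.2⟩, hz.2⟩)

end Partition

lemma measureReal_inter_eq_of_preimage_ae_eq {Y : Type*} [MeasurableSpace Y] {ν : Measure Y}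
    {g : Y → Y} (hg : MeasurePreserving g ν ν) {E F R R' : Set Y} (hE : MeasurableSet E)
    (hR' : MeasurableSet R') (hgE : g ⁻¹' E =ᵐ[ν] F) (hgR : g ⁻¹' R' =ᵐ[ν] R) :
    ν.real (E ∩ R') = ν.real (F ∩ R) := by
  rw [← hg.measureReal_preimage (hE.inter hR').nullMeasurableSet, preimage_inter]
  exact measureReal_congr (hgE.inter hgR)

section Filtration

variable {Y ι : Type*} [Preorder ι]

lemma isSetAlgebra_iUnion_filtration [IsDirectedOrder ι] [Nonempty ι] {m : MeasurableSpace Y}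
    (𝓕 : Filtration ι m) : IsSetAlgebra (⋃ n, {s | MeasurableSet[𝓕 n] s}) where
  empty_mem := mem_iUnion.2 ⟨Classical.arbitrary ι, @MeasurableSet.empty _ (_)⟩
  compl_mem s hs := by
    obtain ⟨n, hn⟩ := mem_iUnion.1 hs
    exact mem_iUnion.2 ⟨n, hn.compl⟩
  union_mem s t hs ht := by
    obtain ⟨i, hi⟩ := mem_iUnion.1 hs
    obtain ⟨j, hj⟩ := mem_iUnion.1 ht
    obtain ⟨k, hik, hjk⟩ := exists_ge_ge i j
    exact mem_iUnion.2 ⟨k, (𝓕.mono hik _ hi).union (𝓕.mono hjk _ hj)⟩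

lemma exists_measurableSet_filtration_symmDiff_lt [IsDirectedOrder ι] [Nonempty ι]
    [m : MeasurableSpace Y] (ν : Measure Y) [IsFiniteMeasure ν] {𝓕 : Filtration ι m}
    (h𝓕 : ⨆ n, 𝓕 n = m) {E : Set Y} (hE : MeasurableSet E) {ε : ℝ} (hε : 0 < ε) :
    ∃ n E', MeasurableSet[𝓕 n] E' ∧ ν.real (symmDiff E E') < ε := by
  have hgen : m = MeasurableSpace.generateFrom (⋃ n, {s | MeasurableSet[𝓕 n] s}) :=
    ((MeasurableSpace.generateFrom_iUnion_measurableSet 𝓕).trans h𝓕).symm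
  obtain ⟨E', hE', h⟩ := (Measure.MeasureDense.of_generateFrom_isSetAlgebra_finite (μ := ν)
    (isSetAlgebra_iUnion_filtration 𝓕) hgen).approx E hE (measure_ne_top _ _) ε hε
  obtain ⟨n, hn⟩ := mem_iUnion.1 hE'
  exact ⟨n, E', hn, (ENNReal.lt_ofReal_iff_toReal_lt (measure_ne_top _ _)).1 h⟩

/-- The filtration of the square of a space whose `n`-th σ-algebra is the product of the `n`-th
σ-algebra of `𝓕` with itself. -/
def filtrationProdSelf {m : MeasurableSpace Y} (𝓕 : Filtration ι m) :
    Filtration ι (m.prod m) where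
  seq n := (𝓕 n).prod (𝓕 n)
  mono' _ _ h := sup_le_sup (MeasurableSpace.comap_mono (𝓕.mono h))
    (MeasurableSpace.comap_mono (𝓕.mono h))
  le' n := sup_le_sup (MeasurableSpace.comap_mono (𝓕.le n)) (MeasurableSpace.comap_mono (𝓕.le n))

lemma iSup_filtrationProdSelf {m : MeasurableSpace Y} {𝓕 : Filtration ι m} (h𝓕 : ⨆ n, 𝓕 n = m) :
    ⨆ n, filtrationProdSelf 𝓕 n = m.prod m := by
  conv_rhs => rw [← h𝓕]
  simp only [MeasurableSpace.prod, MeasurableSpace.comap_iSup, ← iSup_sup_eq]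
  rfl

end Filtration

/-- A Chacon-type rank-one structure for a measure-preserving map `T`. At stage `n` there is a tower
of `height n` disjoint levels of equal measure `width n`, and `T` maps each level to the next one.
The tower of stage `n + 1` begins with two copies of (parts of) the tower of stage `n`, stacked
directly on each other, followed by one further level (the spacer) and a third copy. The towers
exhaust the space, each level is an atom of the σ-algebra `filtration n`, and these σ-algebras
generate. -/
structure ChaconTower {X : Type*} [m : MeasurableSpace X] (μ : Measure X) (T : X → X) where
  height : ℕ → ℕ
  width : ℕ → ℝ
  level : ℕ → ℕ → Set X
  filtration : Filtration ℕ m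
  measurePreserving : MeasurePreserving T μ μ
  measurableSet_level : ∀ n i, MeasurableSet (level n i)
  measureReal_level : ∀ {n i}, i < height n → μ.real (level n i) = width n
  disjoint_level : ∀ {n i j}, i ≠ j → Disjoint (level n i) (level n j)
  preimage_level : ∀ {n i}, i + 1 < height n → T ⁻¹' level n (i + 1) =ᵐ[μ] level n i
  first_level_subset : ∀ {n i}, i < height n → level (n + 1) i ⊆ level n i
  second_level_subset : ∀ {n i}, i < height n → level (n + 1) (height n + i) ⊆ level n i
  third_level_subset : ∀ {n i}, i < height n → level (n + 1) (2 * height n + 1 + i) ⊆ level n i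
  height_lt_height_succ : ∀ n, 3 * height n < height (n + 1)
  width_le_width_succ : ∀ n, width n ≤ 4 * width (n + 1)
  tendsto_height_mul_width : Tendsto (fun n => height n * width n) atTop (nhds 1)
  mem_of_mem_level : ∀ {n i} {A : Set X}, MeasurableSet[filtration n] A →
    ∀ {x y}, x ∈ level n i → y ∈ level n i → x ∈ A → y ∈ A
  iSup_filtration : ⨆ n, filtration n = m

namespace ChaconTower

variable {X : Type*} [MeasurableSpace X] {μ : Measure X} {T : X → X} (C : ChaconTower μ T)

lemma tendsto_height : Tendsto C.height atTop atTop :=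
  (strictMono_nat_of_lt_succ fun n => by have := C.height_lt_height_succ n; omega).tendsto_atTop

lemma tendsto_width : Tendsto C.width atTop (nhds 0) := by
  have hh : Tendsto (fun n => (C.height n : ℝ)) atTop atTop :=
    tendsto_natCast_atTop_atTop.comp C.tendsto_height
  refine (C.tendsto_height_mul_width.div_atTop hh).congr' ?_
  filter_upwards [hh.eventually_ne_atTop 0] with n hn
  exact mul_div_cancel_left₀ _ hn

/-- The rectangle of the square `X × X` with sides the levels `i` and `j` of stage `n`. -/
def rect (n : ℕ) (p : ℕ × ℕ) : Set (X × X) := C.level n p.1 ×ˢ C.level n p.2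

/-- The indices of the rectangles of stage `n`. -/
def grid (n : ℕ) : Finset (ℕ × ℕ) := Finset.range (C.height n) ×ˢ Finset.range (C.height n)

lemma mem_grid {n : ℕ} {p : ℕ × ℕ} : p ∈ C.grid n ↔ p.1 < C.height n ∧ p.2 < C.height n := by
  simp [grid]

lemma measurableSet_rect (n : ℕ) (p : ℕ × ℕ) : MeasurableSet (C.rect n p) :=
  (C.measurableSet_level n p.1).prod (C.measurableSet_level n p.2)

lemma pairwiseDisjoint_rect (n : ℕ) (s : Set (ℕ × ℕ)) : s.PairwiseDisjoint (C.rect n) := by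
  intro p _ q _ hpq
  refine disjoint_prod.2 ?_
  rcases ne_or_eq p.1 q.1 with h | h
  · exact .inl (C.disjoint_level h)
  · exact .inr (C.disjoint_level fun h' => hpq (Prod.ext h h'))

lemma rect_subset_or_disjoint {n : ℕ} {E : Set (X × X)}
    (hE : MeasurableSet[filtrationProdSelf C.filtration n] E) (p : ℕ × ℕ) :
    C.rect n p ⊆ E ∨ Disjoint (C.rect n p) E := by
  refine or_iff_not_imp_right.2 fun hd w hw => ?_
  obtain ⟨z, hz, hzE⟩ := not_disjoint_iff.1 hd
  have hfst : (w.1, z.2) ∈ E :=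
    C.mem_of_mem_level (@measurable_prodMk_right _ _ (C.filtration n) (C.filtration n) z.2 _ hE)
      hz.1 hw.1 hzE
  exact C.mem_of_mem_level (@measurable_prodMk_left _ _ (C.filtration n) (C.filtration n) w.1 _ hE)
    hz.2 hw.2 hfst

lemma preimage_id_prodMap_rect {n i j : ℕ} (hj : j + 1 < C.height n) :
    Prod.map id T ⁻¹' C.rect n (i, j + 1) =ᵐ[μ.prod μ] C.rect n (i, j) :=
  Measure.set_prod_ae_eq EventuallyEq.rfl (C.preimage_level hj)

lemma preimage_prodMap_id_rect {n i j : ℕ} (hi : i + 1 < C.height n) :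
    Prod.map T id ⁻¹' C.rect n (i + 1, j) =ᵐ[μ.prod μ] C.rect n (i, j) :=
  Measure.set_prod_ae_eq (C.preimage_level hi) EventuallyEq.rfl

/-- The part of `E` in the rectangle `p` of stage `n` or of its complement there, whichever is
smaller: it measures how far the rectangle is from being almost contained in or almost disjoint
from `E`. -/
def mixedMass (n : ℕ) (E : Set (X × X)) (p : ℕ × ℕ) : ℝ :=
  min ((μ.prod μ).real (E ∩ C.rect n p)) ((μ.prod μ).real (Eᶜ ∩ C.rect n p))

lemma mixedMass_nonneg (n : ℕ) (E : Set (X × X)) (p : ℕ × ℕ) : 0 ≤ C.mixedMass n E p :=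
  le_min measureReal_nonneg measureReal_nonneg

variable [IsProbabilityMeasure μ]

lemma measureReal_rect {n : ℕ} {p : ℕ × ℕ} (hp : p ∈ C.grid n) :
    (μ.prod μ).real (C.rect n p) = C.width n ^ 2 := by
  rw [mem_grid] at hp
  rw [rect, measureReal_prod_prod, C.measureReal_level hp.1, C.measureReal_level hp.2, sq]

lemma tendsto_sum_mixedMass {E : Set (X × X)} (hE : MeasurableSet E) :
    Tendsto (fun n => ∑ p ∈ C.grid n, C.mixedMass n E p) atTop (nhds 0) := by
  refine Metric.tendsto_atTop.2 fun ε hε => ?_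
  obtain ⟨N, E', hE', hlt⟩ := exists_measurableSet_filtration_symmDiff_lt (μ.prod μ)
    (iSup_filtrationProdSelf C.iSup_filtration) hE hε
  refine ⟨N, fun n hn => ?_⟩
  rw [Real.dist_0_eq_abs, abs_of_nonneg (Finset.sum_nonneg fun p _ => C.mixedMass_nonneg n E p)]
  exact (sum_min_measureReal_inter_le (fun p _ => C.measurableSet_rect n p)
    (C.pairwiseDisjoint_rect n _) (fun p _ => C.rect_subset_or_disjoint
      ((filtrationProdSelf C.filtration).mono hn _ hE') p) E).trans_lt hlt

lemma measureReal_inter_rect_add {E : Set (X × X)} (hE : MeasurableSet E)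
    (hS : Prod.map T T ⁻¹' E =ᵐ[μ.prod μ] E) {n i j : ℕ} (t : ℕ) (hi : i + t < C.height n)
    (hj : j + t < C.height n) :
    (μ.prod μ).real (E ∩ C.rect n (i + t, j + t)) = (μ.prod μ).real (E ∩ C.rect n (i, j)) := by
  induction t with
  | zero => rfl
  | succ t ih =>
    rw [← ih (by omega) (by omega)]
    exact measureReal_inter_eq_of_preimage_ae_eq (C.measurePreserving.prod C.measurePreserving) hE
      (C.measurableSet_rect _ _) hS
      (Measure.set_prod_ae_eq (C.preimage_level hi) (C.preimage_level hj))

lemma measureReal_inter_add_compl_inter_rect {F : Set (X × X)} (hF : MeasurableSet F) {n : ℕ}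
    {p : ℕ × ℕ} (hp : p ∈ C.grid n) :
    (μ.prod μ).real (F ∩ C.rect n p) + (μ.prod μ).real (Fᶜ ∩ C.rect n p) = C.width n ^ 2 := by
  rw [← C.measureReal_rect hp, inter_comm F, inter_comm Fᶜ, ← sdiff_eq,
    measureReal_inter_add_sdiff hF]

/-- The mechanism behind weak mixing: a `T × T`-invariant set cannot be nearly full in the rectangle
`(i, j + 1)` and nearly empty in `(i, j)`. Since the spacer comes after the second copy of the
tower, moving by `height n` steps takes (first copy of level `i`) × (second copy of level `j + 1`)
to (second copy of level `i`) × (third copy of level `j`). -/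
lemma width_sq_le {F : Set (X × X)} (hF : MeasurableSet F)
    (hS : Prod.map T T ⁻¹' F =ᵐ[μ.prod μ] F) {n i j : ℕ} (hi : i < C.height n)
    (hj : j + 1 < C.height n) :
    C.width n ^ 2 ≤ 16 * ((μ.prod μ).real (F ∩ C.rect n (i, j)) +
      (μ.prod μ).real (Fᶜ ∩ C.rect n (i, j + 1))) := by
  have hh := C.height_lt_height_succ n
  have hshift := C.measureReal_inter_rect_add (n := n + 1) (i := i) (j := C.height n + (j + 1))
    hF hS (C.height n) (by omega) (by omega)
  rw [add_comm i, show C.height n + (j + 1) + C.height n = 2 * C.height n + 1 + j by omega]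
    at hshift
  have hsplit := C.measureReal_inter_add_compl_inter_rect (n := n + 1)
    (p := (i, C.height n + (j + 1))) hF (C.mem_grid.2 ⟨by simp only; omega, by simp only; omega⟩)
  have hF' : (μ.prod μ).real (F ∩ C.rect (n + 1) (C.height n + i, 2 * C.height n + 1 + j)) ≤
      (μ.prod μ).real (F ∩ C.rect n (i, j)) :=
    measureReal_mono (inter_subset_inter_right _
      (prod_mono (C.second_level_subset hi) (C.third_level_subset (by omega))))
  have hFc : (μ.prod μ).real (Fᶜ ∩ C.rect (n + 1) (i, C.height n + (j + 1))) ≤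
      (μ.prod μ).real (Fᶜ ∩ C.rect n (i, j + 1)) :=
    measureReal_mono (inter_subset_inter_right _
      (prod_mono (C.first_level_subset hi) (C.second_level_subset hj)))
  have hwidth : C.width n ^ 2 ≤ 16 * C.width (n + 1) ^ 2 := by
    have hpos : 0 ≤ C.width n := C.measureReal_level hi ▸ measureReal_nonneg
    nlinarith [C.width_le_width_succ n]
  linarith

lemma measureReal_symmDiff_inter_rect_le {E : Set (X × X)} (hE : MeasurableSet E)
    (hS : Prod.map T T ⁻¹' E =ᵐ[μ.prod μ] E) {n i j : ℕ} (hi : i < C.height n)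
    (hj : j + 1 < C.height n) :
    (μ.prod μ).real (symmDiff E (Prod.map id T ⁻¹' E) ∩ C.rect n (i, j)) ≤
      16 * (C.mixedMass n E (i, j) + C.mixedMass n E (i, j + 1)) := by
  set D := symmDiff E (Prod.map id T ⁻¹' E)
  have hp : (i, j) ∈ C.grid n := C.mem_grid.2 ⟨hi, by simp only; omega⟩
  have hle_sq : (μ.prod μ).real (D ∩ C.rect n (i, j)) ≤ C.width n ^ 2 :=
    (measureReal_mono inter_subset_right).trans_eq (C.measureReal_rect hp)
  have hle_add {F : Set (X × X)} (hF : MeasurableSet F) (hD : D ⊆ F ∪ Prod.map id T ⁻¹' F) :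
      (μ.prod μ).real (D ∩ C.rect n (i, j)) ≤
        (μ.prod μ).real (F ∩ C.rect n (i, j)) + (μ.prod μ).real (F ∩ C.rect n (i, j + 1)) := by
    rw [measureReal_inter_eq_of_preimage_ae_eq ((MeasurePreserving.id μ).prod C.measurePreserving)
      hF (C.measurableSet_rect n _) EventuallyEq.rfl (C.preimage_id_prodMap_rect hj)]
    refine (measureReal_mono ?_).trans (measureReal_union_le _ _)
    rw [← union_inter_distrib_right]
    exact inter_subset_inter_left _ hD
  have hfull := hle_add hE fun z hz => hz.imp And.left And.left
  have hempty := hle_add hE.compl fun z hz => hz.symm.imp And.right And.right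
  have hoff := C.width_sq_le hE hS hi hj
  have hoff' := C.width_sq_le hE.compl (by rw [preimage_compl]; exact hS.compl) hi hj
  rw [compl_compl] at hoff'
  have hnonneg (A : Set (X × X)) : 0 ≤ (μ.prod μ).real A := measureReal_nonneg
  simp only [mixedMass]
  rcases min_choice ((μ.prod μ).real (E ∩ C.rect n (i, j)))
    ((μ.prod μ).real (Eᶜ ∩ C.rect n (i, j))) with h | h <;>
  rcases min_choice ((μ.prod μ).real (E ∩ C.rect n (i, j + 1)))
    ((μ.prod μ).real (Eᶜ ∩ C.rect n (i, j + 1))) with h' | h' <;>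
  rw [h, h'] <;>
  linarith [hnonneg (E ∩ C.rect n (i, j)), hnonneg (E ∩ C.rect n (i, j + 1)),
    hnonneg (Eᶜ ∩ C.rect n (i, j)), hnonneg (Eᶜ ∩ C.rect n (i, j + 1))]

/-- The last term is the mass outside the rectangles `(i, j)` with `j + 1 < height n`. -/
lemma measureReal_symmDiff_le {E : Set (X × X)} (hE : MeasurableSet E)
    (hS : Prod.map T T ⁻¹' E =ᵐ[μ.prod μ] E) (n : ℕ) :
    (μ.prod μ).real (symmDiff E (Prod.map id T ⁻¹' E)) ≤
      32 * ∑ p ∈ C.grid n, C.mixedMass n E p +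
        (1 - C.height n * (C.height n - 1 : ℕ) * C.width n ^ 2) := by
  set s := Finset.range (C.height n) ×ˢ Finset.range (C.height n - 1)
  have hs {p : ℕ × ℕ} (hp : p ∈ s) : p.1 < C.height n ∧ p.2 + 1 < C.height n := by
    simp only [s, Finset.mem_product, Finset.mem_range] at hp
    omega
  have hgrid {p : ℕ × ℕ} (hp : p ∈ s) : p ∈ C.grid n :=
    C.mem_grid.2 ⟨(hs hp).1, (Nat.lt_succ_self _).trans (hs hp).2⟩
  have hcover := measureReal_le_sum_inter_add (ν := μ.prod μ)
    (fun p _ => C.measurableSet_rect n p) (C.pairwiseDisjoint_rect n s)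
    (symmDiff E (Prod.map id T ⁻¹' E))
  rw [Finset.sum_congr rfl fun p hp => C.measureReal_rect (hgrid hp)] at hcover
  have hmixed : ∑ p ∈ s, C.mixedMass n E p ≤ ∑ p ∈ C.grid n, C.mixedMass n E p :=
    Finset.sum_le_sum_of_subset_of_nonneg (fun p hp => hgrid hp)
      fun p _ _ => C.mixedMass_nonneg n E p
  have hmixed' : ∑ p ∈ s, C.mixedMass n E (p.1, p.2 + 1) ≤
      ∑ p ∈ C.grid n, C.mixedMass n E p := by
    let f : ℕ × ℕ ↪ ℕ × ℕ := (Function.Embedding.refl ℕ).prodMap (addRightEmbedding 1)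
    refine (Finset.sum_map s f (C.mixedMass n E)).symm.trans_le
      (Finset.sum_le_sum_of_subset_of_nonneg (fun q hq => ?_) ?_)
    · obtain ⟨p, hp, rfl⟩ := Finset.mem_map.1 hq
      exact C.mem_grid.2 (hs hp)
    · exact fun p _ _ => C.mixedMass_nonneg n E p
  have hrect := Finset.sum_le_sum fun p hp =>
    C.measureReal_symmDiff_inter_rect_le hE hS (hs hp).1 (hs hp).2
  rw [← Finset.mul_sum, Finset.sum_add_distrib] at hrect
  simp only [Finset.sum_const, nsmul_eq_mul, s, Finset.card_product, Finset.card_range,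
    Nat.cast_mul] at hcover
  linarith

include C in
lemma preimage_id_prodMap_ae_eq {E : Set (X × X)} (hE : MeasurableSet E)
    (hS : Prod.map T T ⁻¹' E =ᵐ[μ.prod μ] E) : Prod.map id T ⁻¹' E =ᵐ[μ.prod μ] E := by
  have hcover : Tendsto (fun n => (C.height n * (C.height n - 1 : ℕ) * C.width n ^ 2 : ℝ)) atTop
      (nhds 1) := by
    have h := C.tendsto_height_mul_width.mul (C.tendsto_height_mul_width.sub C.tendsto_width)
    rw [sub_zero, mul_one] at h
    refine h.congr' ?_
    filter_upwards [C.tendsto_height.eventually_ge_atTop 1] with n hn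
    push_cast [hn]
    ring
  have hlim := ((C.tendsto_sum_mixedMass hE).const_mul 32).add (hcover.const_sub 1)
  rw [mul_zero, sub_self, add_zero] at hlim
  have hzero :=
    (ge_of_tendsto' hlim (C.measureReal_symmDiff_le hE hS)).antisymm measureReal_nonneg
  rw [measureReal_eq_zero_iff, measure_symmDiff_eq_zero_iff] at hzero
  exact hzero.symm

include C in
lemma preimage_prodMap_id_ae_eq {E : Set (X × X)} (hE : MeasurableSet E)
    (hS : Prod.map T T ⁻¹' E =ᵐ[μ.prod μ] E) : Prod.map T id ⁻¹' E =ᵐ[μ.prod μ] E := by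
  have hmp : MeasurePreserving (Prod.map T id) (μ.prod μ) (μ.prod μ) :=
    C.measurePreserving.prod (MeasurePreserving.id μ)
  have h := hmp.quasiMeasurePreserving.preimage_ae_eq (C.preimage_id_prodMap_ae_eq hE hS)
  rw [← preimage_comp, Prod.map_comp_map] at h
  exact h.symm.trans hS

lemma measureReal_inter_rect_eq {E : Set (X × X)} (hE : MeasurableSet E)
    (hS : Prod.map T T ⁻¹' E =ᵐ[μ.prod μ] E) {n : ℕ} {p : ℕ × ℕ} (hp : p ∈ C.grid n) :
    (μ.prod μ).real (E ∩ C.rect n p) = (μ.prod μ).real (E ∩ C.rect n (0, 0)) := by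
  obtain ⟨i, j⟩ := p
  obtain ⟨hi, hj⟩ : i < C.height n ∧ j < C.height n := C.mem_grid.1 hp
  have hcol : (μ.prod μ).real (E ∩ C.rect n (i, j)) = (μ.prod μ).real (E ∩ C.rect n (i, 0)) := by
    clear hp
    induction j with
    | zero => rfl
    | succ j ih =>
      rw [← ih (by omega)]
      exact measureReal_inter_eq_of_preimage_ae_eq
        ((MeasurePreserving.id μ).prod C.measurePreserving) hE (C.measurableSet_rect n _)
        (C.preimage_id_prodMap_ae_eq hE hS) (C.preimage_id_prodMap_rect hj)
  rw [hcol]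
  clear hp hcol
  induction i with
  | zero => rfl
  | succ i ih =>
    rw [← ih (by omega)]
    exact measureReal_inter_eq_of_preimage_ae_eq
      (C.measurePreserving.prod (MeasurePreserving.id μ)) hE (C.measurableSet_rect n _)
      (C.preimage_prodMap_id_ae_eq hE hS) (C.preimage_prodMap_id_rect hi)

/-- As all rectangles of a stage are equally charged by `E`, the smaller of `E` and `Eᶜ` in every
single rectangle is the smaller one globally. -/
lemma min_measureReal_compl_le {E : Set (X × X)} (hE : MeasurableSet E)
    (hS : Prod.map T T ⁻¹' E =ᵐ[μ.prod μ] E) (n : ℕ) :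
    min ((μ.prod μ).real E) ((μ.prod μ).real Eᶜ) ≤
      ∑ p ∈ C.grid n, C.mixedMass n E p + (1 - (C.height n * C.width n) ^ 2) := by
  have hSc : Prod.map T T ⁻¹' Eᶜ =ᵐ[μ.prod μ] Eᶜ := by rw [preimage_compl]; exact hS.compl
  have hcard : ((C.grid n).card : ℝ) * C.width n ^ 2 = (C.height n * C.width n) ^ 2 := by
    rw [grid, Finset.card_product, Finset.card_range]
    push_cast
    ring
  have hle {F : Set (X × X)} (hF : MeasurableSet F) (hFS : Prod.map T T ⁻¹' F =ᵐ[μ.prod μ] F) :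
      (μ.prod μ).real F ≤ (C.grid n).card * (μ.prod μ).real (F ∩ C.rect n (0, 0)) +
        (1 - (C.height n * C.width n) ^ 2) := by
    have h := measureReal_le_sum_inter_add (ν := μ.prod μ) (fun p _ => C.measurableSet_rect n p)
      (C.pairwiseDisjoint_rect n (C.grid n)) F
    rwa [Finset.sum_congr rfl fun p hp => C.measureReal_inter_rect_eq hF hFS hp,
      Finset.sum_congr rfl fun p hp => C.measureReal_rect hp, Finset.sum_const, Finset.sum_const,
      nsmul_eq_mul, nsmul_eq_mul, hcard] at h
  have hmixed : ∑ p ∈ C.grid n, C.mixedMass n E p = (C.grid n).card *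
      min ((μ.prod μ).real (E ∩ C.rect n (0, 0))) ((μ.prod μ).real (Eᶜ ∩ C.rect n (0, 0))) := by
    rw [← nsmul_eq_mul, ← Finset.sum_const]
    refine Finset.sum_congr rfl fun p hp => ?_
    rw [mixedMass, C.measureReal_inter_rect_eq hE hS hp,
      C.measureReal_inter_rect_eq hE.compl hSc hp]
  rw [hmixed, mul_min_of_nonneg _ _ (Nat.cast_nonneg _), ← min_add_add_right]
  exact min_le_min (hle hE hS) (hle hE.compl hSc)

include C in
theorem ergodic_prodMap : Ergodic (Prod.map T T) (μ.prod μ) := by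
  refine ⟨C.measurePreserving.prod C.measurePreserving, ⟨fun E hE hS => ?_⟩⟩
  have hlim := (C.tendsto_sum_mixedMass hE).add ((C.tendsto_height_mul_width.pow 2).const_sub 1)
  rw [one_pow, sub_self, zero_add] at hlim
  have hmin := ge_of_tendsto' hlim (C.min_measureReal_compl_le hE (EventuallyEq.of_eq hS))
  rw [Filter.eventuallyConst_set', ae_eq_empty, ae_eq_univ]
  exact (min_le_iff.1 hmin).imp
    (fun h => (measureReal_eq_zero_iff).1 (h.antisymm measureReal_nonneg))
    (fun h => (measureReal_eq_zero_iff).1 (h.antisymm measureReal_nonneg))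

end ChaconTower

/-! ### Weak mixing from ergodicity of the square -/

section MeanErgodic

variable {Y : Type*} [MeasurableSpace Y] {ν : Measure Y} {S : Y → Y}

lemma iterate_compMeasurePreserving_indicatorConstLp {F : Type*} [NormedAddCommGroup F]
    {p : ENNReal} (hS : MeasurePreserving S ν ν) {P : Set Y} (hP : MeasurableSet P)
    (hνP : ν P ≠ ⊤) (c : F) (j : ℕ) :
    (Lp.compMeasurePreserving S hS)^[j] (indicatorConstLp p hP hνP c) =
      indicatorConstLp p ((hS.iterate j).measurable hP)
        ((hS.iterate j).measure_preimage hP.nullMeasurableSet ▸ hνP) c := by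
  induction j with
  | zero => rfl
  | succ j ih =>
    rw [Function.iterate_succ_apply', ih]
    exact Lp.indicatorConstLp_compMeasurePreserving _ _ _ hS

lemma exists_ae_eq_const_of_compMeasurePreserving_eq {F : Type*} [NormedAddCommGroup F]
    {p : ENNReal} (hS : Ergodic S ν) {g : Lp F p ν}
    (hg : Lp.compMeasurePreserving S hS.toMeasurePreserving g = g) :
    ∃ c, g =ᵐ[ν] Function.const Y c := by
  refine hS.ae_eq_const_of_ae_eq_comp_ae (Lp.aestronglyMeasurable g) ?_
  have h := Lp.coeFn_compMeasurePreserving g hS.toMeasurePreserving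
  rw [hg] at h
  exact h.symm

variable [IsProbabilityMeasure ν]

/-- The mean ergodic theorem for the Koopman operator, tested against indicators: the limit of the
averages of the indicator of `P` is a fixed vector, that is, a constant. -/
lemma exists_tendsto_average_measureReal_inter (hS : Ergodic S ν) {P : Set Y}
    (hP : MeasurableSet P) :
    ∃ c : ℝ, ∀ Q, MeasurableSet Q →
      Tendsto (fun n : ℕ => (n : ℝ)⁻¹ * ∑ j ∈ Finset.range n, ν.real (S^[j] ⁻¹' P ∩ Q)) atTop
        (nhds (c * ν.real Q)) := by
  have hmp : MeasurePreserving S ν ν := hS.toMeasurePreserving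
  let K : Lp ℝ 2 ν →ₗᵢ[ℝ] Lp ℝ 2 ν := Lp.compMeasurePreservingₗᵢ ℝ S hmp
  let u : Lp ℝ 2 ν := indicatorConstLp 2 hP (measure_ne_top ν P) 1
  have hlim := K.toContinuousLinearMap.tendsto_birkhoffAverage_orthogonalProjection
    K.norm_toContinuousLinearMap_le u
  set g := (K.toContinuousLinearMap.eqLocus
    (1 : Lp ℝ 2 ν →L[ℝ] Lp ℝ 2 ν)).orthogonalProjectionOnto u
  obtain ⟨c, hc⟩ := exists_ae_eq_const_of_compMeasurePreserving_eq hS (g := (g : Lp ℝ 2 ν)) g.2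
  refine ⟨c, fun Q hQ => ?_⟩
  let v : Lp ℝ 2 ν := indicatorConstLp 2 hQ (measure_ne_top ν Q) 1
  have hinner : inner ℝ v (g : Lp ℝ 2 ν) = c * ν.real Q := by
    rw [L2.inner_indicatorConstLp_one,
      setIntegral_congr_ae (g := fun _ => c) hQ (hc.mono fun x hx _ => hx)]
    simp [mul_comm]
  rw [← hinner]
  refine (tendsto_const_nhds.inner hlim).congr fun n => ?_
  rw [birkhoffAverage, birkhoffSum, inner_smul_right, inner_sum]
  congr 1
  refine Finset.sum_congr rfl fun j _ => ?_
  rw [inter_comm, ← L2.real_inner_indicatorConstLp_one_indicatorConstLp_one hQ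
    ((hmp.iterate j).measurable hP)]
  exact congrArg (inner ℝ v) (iterate_compMeasurePreserving_indicatorConstLp hmp hP _ _ j)

lemma tendsto_average_measureReal_inter (hS : Ergodic S ν) {P Q : Set Y}
    (hP : MeasurableSet P) (hQ : MeasurableSet Q) :
    Tendsto (fun n : ℕ => (n : ℝ)⁻¹ * ∑ j ∈ Finset.range n, ν.real (S^[j] ⁻¹' P ∩ Q)) atTop
      (nhds (ν.real P * ν.real Q)) := by
  obtain ⟨c, hc⟩ := exists_tendsto_average_measureReal_inter hS hP
  have huniv := hc univ .univ
  simp only [inter_univ, probReal_univ, mul_one,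
    fun j => (hS.iterate j).measureReal_preimage hP.nullMeasurableSet] at huniv
  have hcP : c = ν.real P := by
    refine tendsto_nhds_unique huniv (tendsto_const_nhds.congr' ?_)
    filter_upwards [eventually_ne_atTop 0] with n hn
    simp [hn]
  exact hcP ▸ hc Q hQ

end MeanErgodic

lemma tendsto_average_sq_sub {a : ℕ → ℝ} {c : ℝ}
    (ha : Tendsto (fun n : ℕ => (n : ℝ)⁻¹ * ∑ j ∈ Finset.range n, a j) atTop (nhds c))
    (ha2 : Tendsto (fun n : ℕ => (n : ℝ)⁻¹ * ∑ j ∈ Finset.range n, a j ^ 2) atTop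
      (nhds (c ^ 2))) :
    Tendsto (fun n : ℕ => (n : ℝ)⁻¹ * ∑ j ∈ Finset.range n, (a j - c) ^ 2) atTop (nhds 0) := by
  have hlim := (ha2.sub (ha.const_mul (2 * c))).add_const (c ^ 2)
  rw [show c ^ 2 - 2 * c * c + c ^ 2 = 0 by ring] at hlim
  refine hlim.congr' ?_
  filter_upwards [eventually_ne_atTop 0] with n hn
  have hexpand : ∑ j ∈ Finset.range n, (a j - c) ^ 2 =
      ∑ j ∈ Finset.range n, a j ^ 2 - 2 * c * ∑ j ∈ Finset.range n, a j + n * c ^ 2 := by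
    simp_rw [show ∀ j, (a j - c) ^ 2 = a j ^ 2 - 2 * c * a j + c ^ 2 by intro j; ring]
    rw [Finset.sum_add_distrib, Finset.sum_sub_distrib, ← Finset.mul_sum, Finset.sum_const,
      Finset.card_range, nsmul_eq_mul]
  rw [hexpand]
  field_simp

/-- Ergodicity of `T × T` applied to `(A × A, B × B)` and to `(A × X, B × X)` gives the averages of
the squares and of the first powers of `μ (T⁻ʲ A ∩ B)`. -/
lemma tendsto_average_sq_sub_of_ergodic_prodMap {X : Type*} [MeasurableSpace X] {μ : Measure X}
    [IsProbabilityMeasure μ] {T : X → X} (h : Ergodic (Prod.map T T) (μ.prod μ)) {A B : Set X}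
    (hA : MeasurableSet A) (hB : MeasurableSet B) :
    Tendsto (fun n : ℕ => (n : ℝ)⁻¹ * ∑ j ∈ Finset.range n,
      (μ.real (T^[j] ⁻¹' A ∩ B) - μ.real A * μ.real B) ^ 2) atTop (nhds 0) := by
  have hsq := tendsto_average_measureReal_inter h (hA.prod hA) (hB.prod hB)
  have hlin := tendsto_average_measureReal_inter h (hA.prod .univ) (hB.prod .univ)
  simp only [Prod.map_iterate, preimage_prod_map_prod, preimage_univ, prod_inter_prod,
    measureReal_prod_prod, inter_univ, probReal_univ, mul_one, ← pow_two, ← mul_pow] at hsq hlin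
  exact tendsto_average_sq_sub hlin hsq

/-! ### Dyadic squares -/

lemma rep_nonneg (x : AddCircle (1 : ℝ)) : 0 ≤ rep x := ((AddCircle.equivIco 1 0) x).2.1

lemma rep_lt_one (x : AddCircle (1 : ℝ)) : rep x < 1 := by
  simpa [rep] using ((AddCircle.equivIco (1 : ℝ) 0) x).2.2

lemma coe_rep (x : AddCircle (1 : ℝ)) : ((rep x : ℝ) : AddCircle (1 : ℝ)) = x :=
  AddCircle.coe_equivIco

lemma rep_coe {t : ℝ} (ht : t ∈ Ico 0 1) : rep (t : AddCircle (1 : ℝ)) = t := by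
  rw [rep, AddCircle.equivIco_coe_eq (by simpa using ht)]

lemma measurable_rep : Measurable rep :=
  measurable_subtype_coe.comp (AddCircle.measurableEquivIco 1 0).measurable

lemma measurePreserving_rep : MeasurePreserving rep volume (volume.restrict (Ico 0 1)) := by
  have hmk := AddCircle.measurePreserving_mk 1 0
  rw [zero_add, ← restrict_Ico_eq_restrict_Ioc] at hmk
  refine ⟨measurable_rep, ?_⟩
  rw [← hmk.map_eq, Measure.map_map measurable_rep hmk.measurable]
  refine (Measure.map_congr ?_).trans Measure.map_id
  filter_upwards [ae_restrict_mem measurableSet_Ico] with t ht using rep_coe ht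

/-- The index of the dyadic arc of length `2⁻ⁿ` which contains `x`. -/
def cell1 (n : ℕ) (x : AddCircle (1 : ℝ)) : ℕ := ⌊2 ^ n * rep x⌋₊

/-- The coordinates of the dyadic square of side `2⁻ⁿ` which contains `x`, so that the level sets
of `cell n` are the dyadic squares of side `2⁻ⁿ`. -/
def cell (n : ℕ) (x : T2) : ℕ × ℕ := (cell1 n x.1, cell1 n x.2)

lemma le_cell1_iff {n a : ℕ} {x : AddCircle (1 : ℝ)} : a ≤ cell1 n x ↔ a * (1 / 2 ^ n) ≤ rep x := by
  rw [cell1, Nat.le_floor_iff (mul_nonneg (by positivity) (rep_nonneg x)), mul_one_div,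
    div_le_iff₀' (by positivity)]

lemma pow_le_cell1_add_iff {n c : ℕ} {x : AddCircle (1 : ℝ)} :
    2 ^ n ≤ cell1 n x + c ↔ 1 - c * (1 / 2 ^ n) ≤ rep x := by
  have hp : (0 : ℝ) < 2 ^ n := by positivity
  rw [← Int.ofNat_le, cell1]
  push_cast
  rw [Int.natCast_floor_eq_floor (mul_nonneg hp.le (rep_nonneg x)), ← sub_le_iff_le_add,
    Int.le_floor, mul_one_div, one_sub_div hp.ne', div_le_iff₀' hp]
  push_cast
  rfl

lemma cell1_lt (n : ℕ) (x : AddCircle (1 : ℝ)) : cell1 n x < 2 ^ n := by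
  rw [← not_le, ← add_zero (cell1 n x), pow_le_cell1_add_iff]
  simpa using rep_lt_one x

lemma cell1_eq_iff {n a : ℕ} {x : AddCircle (1 : ℝ)} :
    cell1 n x = a ↔ 2 ^ n * rep x ∈ Ico (a : ℝ) (a + 1) :=
  Nat.floor_eq_iff (mul_nonneg (by positivity) (rep_nonneg x))

lemma cell1_eq_iff_rep_mem {n a : ℕ} {x : AddCircle (1 : ℝ)} :
    cell1 n x = a ↔ rep x ∈ Ico ((a : ℝ) / 2 ^ n) ((a + 1) / 2 ^ n) := by
  have hp : (0 : ℝ) < 2 ^ n := by positivity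
  rw [cell1_eq_iff, mem_Ico, mem_Ico, div_le_iff₀' hp, lt_div_iff₀' hp]

lemma cell1_succ_div_two (n : ℕ) (x : AddCircle (1 : ℝ)) : cell1 (n + 1) x / 2 = cell1 n x := by
  rw [cell1, cell1, ← Nat.floor_div_natCast]
  congr 1
  push_cast
  ring

lemma cell1_add {n a b : ℕ} (hb : b < 2 ^ n) {x : AddCircle (1 : ℝ)} (hx : cell1 n x = a) :
    cell1 n (x + (((b - a : ℝ) / 2 ^ n : ℝ) : AddCircle (1 : ℝ))) = b := by
  have hp : (0 : ℝ) < 2 ^ n := by positivity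
  have hb' : (b : ℝ) + 1 ≤ 2 ^ n := by exact_mod_cast hb
  rw [cell1_eq_iff] at hx
  have hshift : 2 ^ n * (rep x + (b - a : ℝ) / 2 ^ n) ∈ Ico (b : ℝ) (b + 1) := by
    rw [mul_add, mul_div_cancel₀ _ hp.ne']
    constructor <;> linarith [hx.1, hx.2]
  have hmem : rep x + (b - a : ℝ) / 2 ^ n ∈ Ico (0 : ℝ) 1 :=
    ⟨nonneg_of_mul_nonneg_right (b.cast_nonneg.trans hshift.1) hp,
      lt_of_mul_lt_mul_left (by linarith [hshift.2]) hp.le⟩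
  rw [cell1_eq_iff]
  conv in rep _ => rw [← coe_rep x, ← AddCircle.coe_add, rep_coe hmem]
  exact hshift

lemma map_div_two_cell_succ (n : ℕ) (x : T2) :
    Prod.map (· / 2) (· / 2) (cell (n + 1) x) = cell n x :=
  Prod.ext (cell1_succ_div_two n x.1) (cell1_succ_div_two n x.2)

lemma measurable_cell1 (n : ℕ) : Measurable (cell1 n) :=
  Nat.measurable_floor.comp (measurable_const.mul measurable_rep)

lemma measurable_cell (n : ℕ) : Measurable (cell n) :=
  ((measurable_cell1 n).comp measurable_fst).prodMk ((measurable_cell1 n).comp measurable_snd)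

lemma measureReal_cell1_preimage {n a : ℕ} (ha : a < 2 ^ n) :
    volume.real (cell1 n ⁻¹' {a}) = 1 / 2 ^ n := by
  have hpre : cell1 n ⁻¹' {a} = rep ⁻¹' Ico ((a : ℝ) / 2 ^ n) ((a + 1) / 2 ^ n) :=
    ext fun x => cell1_eq_iff_rep_mem
  have ha' : (a : ℝ) + 1 ≤ 2 ^ n := by exact_mod_cast ha
  have hsub : Ico ((a : ℝ) / 2 ^ n) ((a + 1) / 2 ^ n) ⊆ Ico 0 1 :=
    Ico_subset_Ico (by positivity) (div_le_one_of_le₀ ha' (by positivity))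
  rw [hpre, measurePreserving_rep.measureReal_preimage measurableSet_Ico.nullMeasurableSet,
    measureReal_restrict_apply measurableSet_Ico, inter_eq_left.2 hsub,
    Real.volume_real_Ico_of_le (by gcongr; linarith)]
  ring

lemma measureReal_cell_preimage {n : ℕ} {p : ℕ × ℕ} (h1 : p.1 < 2 ^ n) (h2 : p.2 < 2 ^ n) :
    volume.real (cell n ⁻¹' {p}) = 1 / 4 ^ n := by
  have hprod : cell n ⁻¹' {p} = (cell1 n ⁻¹' {p.1}) ×ˢ (cell1 n ⁻¹' {p.2}) := by
    ext x
    simp [cell, Prod.ext_iff]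
  rw [hprod, Measure.volume_eq_prod, measureReal_prod_prod, measureReal_cell1_preimage h1,
    measureReal_cell1_preimage h2, div_mul_div_comm, ← mul_pow]
  norm_num

instance isProbabilityMeasure_volume_T2 : IsProbabilityMeasure (volume : Measure T2) := by
  have : IsProbabilityMeasure (volume : Measure (AddCircle (1 : ℝ))) :=
    ⟨by simp [AddCircle.measure_univ]⟩
  rw [Measure.volume_eq_prod]
  infer_instance

lemma tendsto_cell1_div_pow (x : AddCircle (1 : ℝ)) :
    Tendsto (fun n : ℕ => (cell1 n x : ℝ) / 2 ^ n) atTop (nhds (rep x)) := by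
  have hpow : Tendsto (fun n : ℕ => (2 : ℝ) ^ n) atTop atTop :=
    tendsto_pow_atTop_atTop_of_one_lt one_lt_two
  simpa only [Function.comp_def, mul_comm, cell1] using
    (tendsto_nat_floor_mul_div_atTop (rep_nonneg x)).comp hpow

lemma measurable_of_measurable_cell1 {α : Type*} [MeasurableSpace α] {f : α → AddCircle (1 : ℝ)}
    (hf : ∀ n, Measurable fun a => cell1 n (f a)) : Measurable f := by
  have hrep : Measurable fun a => rep (f a) :=
    measurable_of_tendsto_metrizable (f := fun n a => (cell1 n (f a) : ℝ) / 2 ^ n)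
      (fun n => (measurable_from_top.comp (hf n)).div_const _)
      (tendsto_pi_nhds.2 fun a => tendsto_cell1_div_pow _)
  rw [show f = fun a => ((rep (f a) : ℝ) : AddCircle (1 : ℝ)) from funext fun a => (coe_rep _).symm]
  exact AddCircle.measurable_mk'.comp hrep

/-- The filtration of the torus whose `n`-th σ-algebra is generated by the dyadic squares of side
`2⁻ⁿ`. -/
def dyadicFiltration : Filtration ℕ (inferInstance : MeasurableSpace T2) where
  seq n := MeasurableSpace.comap (cell n) inferInstance
  mono' := monotone_nat_of_le_succ fun n => by
    rw [show cell n = Prod.map (· / 2) (· / 2) ∘ cell (n + 1) from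
      funext fun x => (map_div_two_cell_succ n x).symm, ← MeasurableSpace.comap_comp]
    exact MeasurableSpace.comap_mono (measurable_of_countable _).comap_le
  le' n := (measurable_cell n).comap_le

lemma iSup_dyadicFiltration :
    ⨆ n, dyadicFiltration n = (inferInstance : MeasurableSpace T2) := by
  refine le_antisymm (iSup_le dyadicFiltration.le) ?_
  have hcell (n : ℕ) : Measurable[⨆ n, dyadicFiltration n] (cell n) :=
    Measurable.iSup' n (comap_measurable (cell n))
  have hfst : Measurable[⨆ n, dyadicFiltration n] (Prod.fst : T2 → AddCircle (1 : ℝ)) :=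
    @measurable_of_measurable_cell1 _ (_) _ fun n => measurable_fst.comp (hcell n)
  have hsnd : Measurable[⨆ n, dyadicFiltration n] (Prod.snd : T2 → AddCircle (1 : ℝ)) :=
    @measurable_of_measurable_cell1 _ (_) _ fun n => measurable_snd.comp (hcell n)
  exact sup_le hfst.comap_le hsnd.comap_le

lemma mem_of_measurableSet_dyadicFiltration {n : ℕ} {A : Set T2}
    (hA : MeasurableSet[dyadicFiltration n] A) {x y : T2} (hxy : cell n x = cell n y)
    (hx : x ∈ A) : y ∈ A := by
  obtain ⟨P, -, rfl⟩ := hA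
  rwa [mem_preimage, ← hxy]

/-! ### The towers of the Chacon-type maps -/

/-- The translation of the torus which carries the dyadic square of side `2⁻ⁿ` with coordinates `p`
onto the one with coordinates `q`. -/
def disp (n : ℕ) (p q : ℕ × ℕ) : T2 :=
  tv (((q.1 : ℝ) - p.1) / 2 ^ n) (((q.2 : ℝ) - p.2) / 2 ^ n)

lemma cell_add_disp {n : ℕ} {q : ℕ × ℕ} (h1 : q.1 < 2 ^ n) (h2 : q.2 < 2 ^ n) (x : T2) :
    cell n (x + disp n (cell n x) q) = q :=
  Prod.ext (cell1_add h1 rfl) (cell1_add h2 rfl)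

lemma tv_eq_disp {n : ℕ} {p q : ℕ × ℕ} {a b : ℝ} (h1 : (q.1 : ℝ) - p.1 = a * 2 ^ n)
    (h2 : (q.2 : ℝ) - p.2 = b * 2 ^ n) : tv a b = disp n p q := by
  rw [disp, h1, h2, mul_div_cancel_right₀ _ (by positivity),
    mul_div_cancel_right₀ _ (by positivity)]

lemma chaconU_one {x : T2} {p : ℕ × ℕ} (hp : cell 1 x = p) :
    chaconU 1 x =
      if p.1 < 1 ∧ 1 ≤ p.2 then x + tv (1/2) 0
      else if 1 ≤ p.1 ∧ 1 ≤ p.2 then x + tv (-(1/2)) (-(1/2))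
      else if p.1 < 1 ∧ p.2 < 1 then x + tv 0 (1/2)
      else x := by
  subst hp
  have hle (y : AddCircle (1 : ℝ)) : 1/2 ≤ rep y ↔ 1 ≤ cell1 1 y := by
    simpa using (le_cell1_iff (n := 1) (a := 1) (x := y)).symm
  simp only [chaconU, cell, ← not_le, hle, rep_nonneg, (rep_lt_one _).not_ge, not_false_eq_true,
    true_and, and_true]

lemma chaconU_add_two {n : ℕ} {x : T2} {p : ℕ × ℕ} (hp : cell (n + 2) x = p) {s : ℝ}
    (hs : s = 1 / 2 ^ (n + 2)) :
    chaconU (n + 2) x =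
      if p.1 + 4 = 2 ^ (n + 2) ∧ p.2 = 1 then x + tv (5*s-1) (1-2*s)
      else if p.1 + 3 = 2 ^ (n + 2) ∧ p.2 = 1 then x + tv s 0
      else if p.1 + 4 = 2 ^ (n + 2) ∧ p.2 = 0 then x + tv (3*s) s
      else if p.1 + 3 = 2 ^ (n + 2) ∧ p.2 = 0 then x + tv s 0
      else if 2 ^ (n + 2) ≤ p.1 + 2 ∧ p.2 = 1 then x + tv (2*s-1) (1-3*s)
      else if p.1 + 2 = 2 ^ (n + 2) ∧ p.2 = 0 then x + tv (2*s-1) (1-s)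
      else if p.1 + 1 = 2 ^ (n + 2) ∧ p.2 = 0 then x
      else chaconU (n + 1) x := by
  subst hp
  have hcol (c : ℕ) : 1 - c * s ≤ rep x.1 ↔ 2 ^ (n + 2) ≤ cell1 (n + 2) x.1 + c :=
    hs ▸ pow_le_cell1_add_iff.symm
  have hrow (c : ℕ) : c * s ≤ rep x.2 ↔ c ≤ cell1 (n + 2) x.2 := hs ▸ le_cell1_iff.symm
  have hcol1 := hcol 1
  have hcol2 := hcol 2
  have hcol3 := hcol 3
  have hcol4 := hcol 4
  have hrow1 := hrow 1
  have hrow2 := hrow 2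
  push_cast at hcol1 hcol2 hcol3 hcol4 hrow1 hrow2
  rw [one_mul] at hcol1 hrow1
  have hlt := cell1_lt (n + 2) x.1
  simp only [chaconU, cell, ← not_le, ← hs, hcol1, hcol2, hcol3, hcol4, hrow1, hrow2, rep_nonneg,
    (rep_lt_one _).not_ge, not_false_eq_true, true_and]
  iterate 7 refine if_congr (by omega) rfl ?_
  rfl

lemma chaconU_succ_eq {m : ℕ} (hm : 1 ≤ m) {x : T2}
    (hx : (cell m x).1 + 2 < 2 ^ m ∨ (cell m x).2 ≠ 0) : chaconU (m + 1) x = chaconU m x := by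
  obtain ⟨k, rfl⟩ : ∃ k, m = k + 1 := ⟨m - 1, by omega⟩
  rw [← map_div_two_cell_succ, Prod.map_fst, Prod.map_snd] at hx
  rw [chaconU_add_two (n := k) rfl rfl, pow_succ]
  rw [show k + 1 + 1 = k + 2 from rfl] at hx
  iterate 7 rw [if_neg (by omega)]

/-- `U_m` translates the dyadic square of side `2⁻ⁿ` with coordinates `p` onto the one with
coordinates `q`, for all `m ≥ n`. -/
def Carries (n : ℕ) (p q : ℕ × ℕ) : Prop :=
  ∀ m ≥ n, ∀ x, cell n x = p → chaconU m x = x + disp n p q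

lemma carries_of_chaconU_eq {n : ℕ} (hn : 1 ≤ n) {p q : ℕ × ℕ} (hp : p.1 + 2 < 2 ^ n ∨ p.2 ≠ 0)
    (h : ∀ x, cell n x = p → chaconU n x = x + disp n p q) : Carries n p q := by
  intro m hm x hx
  suffices hm' : ((cell m x).1 + 2 < 2 ^ m ∨ (cell m x).2 ≠ 0) ∧ chaconU m x = x + disp n p q from
    hm'.2
  induction m, hm using Nat.le_induction with
  | base => exact ⟨hx ▸ hp, h x hx⟩
  | succ m hm ih =>
    refine ⟨?_, (chaconU_succ_eq (hn.trans hm) ih.1).trans ih.2⟩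
    have hreg := ih.1
    rw [← map_div_two_cell_succ, Prod.map_fst, Prod.map_snd] at hreg
    rw [pow_succ]
    omega

/-- The four dyadic squares of side `2⁻ⁿ⁻¹` which make up the square `p` of side `2⁻ⁿ`: the bits
`a` and `b` select the right half and the upper half. -/
def quarter (a b : Bool) (p : ℕ × ℕ) : ℕ × ℕ := (Nat.bit a p.1, Nat.bit b p.2)

lemma cell_eq_of_cell_succ_eq_quarter {n : ℕ} {a b : Bool} {p : ℕ × ℕ} {x : T2}
    (hx : cell (n + 1) x = quarter a b p) : cell n x = p := by
  rw [← map_div_two_cell_succ, hx]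
  exact Prod.ext (Nat.bit_div_two a p.1) (Nat.bit_div_two b p.2)

lemma disp_quarter (n : ℕ) (a b : Bool) (p q : ℕ × ℕ) :
    disp (n + 1) (quarter a b p) (quarter a b q) = disp n p q := by
  simp only [disp, quarter, Nat.bit_val]
  congr 1 <;> (push_cast; rw [pow_succ]; field_simp; ring)

lemma Carries.quarter {n : ℕ} {p q : ℕ × ℕ} (h : Carries n p q) (a b : Bool) :
    Carries (n + 1) (quarter a b p) (quarter a b q) := fun m hm x hx => by
  rw [disp_quarter]
  exact h m (by omega) x (cell_eq_of_cell_succ_eq_quarter hx)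

/-- The dyadic square of side `2⁻ⁿ` in the lower right corner of the torus, the only one outside
the tower of stage `n`. -/
def corner (n : ℕ) : ℕ × ℕ := (2 ^ n - 1, 0)

lemma corner_succ (n : ℕ) : corner (n + 1) = quarter true false (corner n) := by
  obtain ⟨k, hk⟩ : ∃ k, k + 1 = 2 ^ n := ⟨_, Nat.sub_add_cancel Nat.one_le_two_pow⟩
  rw [corner, corner, pow_succ, ← hk]
  simp [quarter, Nat.bit_val, add_mul, mul_comm]

/-- The dyadic squares of side `2⁻ⁿ` in the order in which `U_n` runs through them. The tower is cut
into the four quarter columns, and three of the quarters of the corner serve as spacers. -/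
def tower : ℕ → List (ℕ × ℕ)
  | 0 => []
  | n + 1 =>
    (tower n).map (quarter false true) ++
      ((tower n).map (quarter true true) ++ quarter false true (corner n) ::
        ((tower n).map (quarter false false) ++ quarter true true (corner n) ::
          ((tower n).map (quarter true false) ++ [quarter false false (corner n)])))

lemma length_tower_succ (n : ℕ) : (tower (n + 1)).length = 4 * (tower n).length + 3 := by
  simp only [tower, List.length_append, List.length_map, List.length_cons, List.length_nil]
  omega

lemma length_tower_add_one (n : ℕ) : (tower n).length + 1 = 4 ^ n := by
  induction n with
  | zero => rfl
  | succ n ih =>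
    rw [length_tower_succ, pow_succ, ← ih]
    ring

lemma quarter_eq_quarter {a b a' b' : Bool} {p q : ℕ × ℕ} :
    quarter a b p = quarter a' b' q ↔ (a = a' ∧ b = b') ∧ p = q := by
  simp only [quarter, Prod.ext_iff, Nat.bit_val]
  grind [Bool.toNat]

lemma quarter_mem_corner_cons_tower_iff {n : ℕ} {a b : Bool} {p : ℕ × ℕ} :
    quarter a b p ∈ corner (n + 1) :: tower (n + 1) ↔ p ∈ corner n :: tower n := by
  cases a <;> cases b <;>
    simp [tower, corner_succ, quarter_eq_quarter, -Prod.exists, -Prod.forall, or_comm]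

lemma mem_corner_cons_tower_iff {n : ℕ} :
    ∀ {p : ℕ × ℕ}, p ∈ corner n :: tower n ↔ p.1 < 2 ^ n ∧ p.2 < 2 ^ n := by
  induction n with
  | zero => simp [tower, corner, Prod.ext_iff]
  | succ n ih =>
    intro p
    have hp : quarter p.1.bodd p.2.bodd (p.1.div2, p.2.div2) = p :=
      Prod.ext p.1.bit_bodd_div2 p.2.bit_bodd_div2
    rw [← hp, quarter_mem_corner_cons_tower_iff, ih]
    exact and_congr Nat.bit_lt_two_pow_succ_iff.symm Nat.bit_lt_two_pow_succ_iff.symm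

/-- The list has `4 ^ n` entries and contains all of the `4 ^ n` dyadic squares. -/
lemma nodup_corner_cons_tower (n : ℕ) : (corner n :: tower n).Nodup := by
  have hset : (corner n :: tower n).toFinset = Finset.range (2 ^ n) ×ˢ Finset.range (2 ^ n) := by
    ext p
    rw [List.mem_toFinset, mem_corner_cons_tower_iff, Finset.mem_product, Finset.mem_range,
      Finset.mem_range]
  rw [← Multiset.coe_nodup, ← Multiset.toFinset_card_eq_card_iff_nodup]
  change (corner n :: tower n).toFinset.card = (corner n :: tower n).length
  rw [hset, Finset.card_product, Finset.card_range, List.length_cons, length_tower_add_one]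
  exact (mul_pow 2 2 n).symm

lemma head?_tower_succ (n : ℕ) : (tower (n + 1)).head? = some (0, 2 ^ (n + 1) - 1) := by
  induction n with
  | zero => rfl
  | succ n ih =>
    obtain ⟨k, hk⟩ : ∃ k, k + 1 = 2 ^ (n + 1) := ⟨_, Nat.sub_add_cancel Nat.one_le_two_pow⟩
    rw [tower, List.head?_append, List.head?_map, ih, pow_succ _ (n + 1), ← hk]
    simp [quarter, Nat.bit_val, add_mul, mul_comm]

lemma getLast?_tower_succ (n : ℕ) : (tower (n + 1)).getLast? = some (2 ^ (n + 1) - 2, 0) := by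
  obtain ⟨k, hk⟩ : ∃ k, k + 1 = 2 ^ n := ⟨_, Nat.sub_add_cancel Nat.one_le_two_pow⟩
  rw [pow_succ, ← hk]
  simp [tower, quarter, corner, List.getLast?_cons, Nat.bit_val, ← hk, add_mul, mul_comm]

/-- The six places where the tower of stage `n + 2` passes from a column to the next one or to a
spacer. -/
lemma carries_junctions {n N : ℕ} (hN : N + 4 = 2 ^ (n + 2)) :
    Carries (n + 2) (N, 1) (1, N + 3) ∧ Carries (n + 2) (N + 1, 1) (N + 2, 1) ∧
    Carries (n + 2) (N + 2, 1) (0, N + 2) ∧ Carries (n + 2) (N, 0) (N + 3, 1) ∧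
    Carries (n + 2) (N + 3, 1) (1, N + 2) ∧ Carries (n + 2) (N + 1, 0) (N + 2, 0) := by
  have hN' : (N : ℝ) + 4 = 2 ^ (n + 2) := by exact_mod_cast hN
  have hs : 1 / 2 ^ (n + 2) * (2 : ℝ) ^ (n + 2) = 1 := one_div_mul_cancel (by positivity)
  have hn : 1 ≤ n + 2 := by omega
  refine ⟨?_, ?_, ?_, ?_, ?_, ?_⟩ <;> refine carries_of_chaconU_eq hn (by omega) fun x hx => ?_ <;>
    rw [chaconU_add_two hx rfl]
  · rw [if_pos (by omega)]
    exact congrArg (x + ·) (tv_eq_disp (by push_cast; linarith) (by push_cast; linarith))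
  · rw [if_neg (by omega), if_pos (by omega)]
    exact congrArg (x + ·) (tv_eq_disp (by push_cast; linarith) (by push_cast; linarith))
  · rw [if_neg (by omega), if_neg (by omega), if_neg (by omega), if_neg (by omega),
      if_pos (by omega)]
    exact congrArg (x + ·) (tv_eq_disp (by push_cast; linarith) (by push_cast; linarith))
  · rw [if_neg (by omega), if_neg (by omega), if_pos (by omega)]
    exact congrArg (x + ·) (tv_eq_disp (by push_cast; linarith) (by push_cast; linarith))
  · rw [if_neg (by omega), if_neg (by omega), if_neg (by omega), if_neg (by omega),
      if_pos (by omega)]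
    exact congrArg (x + ·) (tv_eq_disp (by push_cast; linarith) (by push_cast; linarith))
  · rw [if_neg (by omega), if_neg (by omega), if_neg (by omega), if_pos (by omega)]
    exact congrArg (x + ·) (tv_eq_disp (by push_cast; linarith) (by push_cast; linarith))

lemma isChain_carries_tower_one : (tower 1).IsChain (Carries 1) := by
  have hfst : Carries 1 (0, 1) (1, 1) := carries_of_chaconU_eq le_rfl (by omega) fun x hx => by
    rw [chaconU_one hx, if_pos (by omega)]
    exact congrArg (x + ·) (tv_eq_disp (by norm_num) (by norm_num))
  have hsnd : Carries 1 (1, 1) (0, 0) := carries_of_chaconU_eq le_rfl (by omega) fun x hx => by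
    rw [chaconU_one hx, if_neg (by omega), if_pos (by omega)]
    exact congrArg (x + ·) (tv_eq_disp (by norm_num) (by norm_num))
  exact List.isChain_cons_cons.2 ⟨hfst, List.isChain_pair.2 hsnd⟩

lemma isChain_carries_tower (n : ℕ) : (tower (n + 1)).IsChain (Carries (n + 1)) := by
  induction n with
  | zero => exact isChain_carries_tower_one
  | succ n ih =>
    obtain ⟨M, hM⟩ : ∃ M, M + 2 = 2 ^ (n + 1) :=
      ⟨2 ^ (n + 1) - 2, by have := Nat.two_pow_pos n; omega⟩
    obtain ⟨h1, h2, h3, h4, h5, h6⟩ := carries_junctions (n := n) (N := 2 * M)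
      (by rw [pow_succ]; omega)
    have hcol (a b : Bool) : ((tower (n + 1)).map (quarter a b)).IsChain (Carries (n + 2)) :=
      List.isChain_map_of_isChain _ (fun p q h => h.quarter a b) ih
    have hlast (a b : Bool) : ((tower (n + 1)).map (quarter a b)).getLast? =
        some (2 * M + a.toNat, b.toNat) := by
      rw [List.getLast?_map, getLast?_tower_succ, ← hM]
      simp [quarter, Nat.bit_val]
    have hhead (a b : Bool) (l : List (ℕ × ℕ)) : ((tower (n + 1)).map (quarter a b) ++ l).head? =
        some (a.toNat, 2 * M + 2 + b.toNat) := by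
      rw [List.head?_append, List.head?_map, head?_tower_succ, ← hM]
      simp [quarter, Nat.bit_val, mul_add]
    have hcorner (a b : Bool) : quarter a b (corner (n + 1)) = (2 * M + 2 + a.toNat, b.toNat) := by
      simp [quarter, corner, Nat.bit_val, ← hM, mul_add]
    rw [tower, hcorner, hcorner, hcorner]
    simp [List.isChain_append, List.isChain_cons, *]

/-- The `i`-th level of the tower of stage `n`, as a subset of the torus. -/
def towerLevel (n i : ℕ) : Set T2 := {x | (tower n)[i]? = some (cell n x)}

lemma lt_length_of_mem_towerLevel {n i : ℕ} {x : T2} (hx : x ∈ towerLevel n i) :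
    i < (tower n).length :=
  (List.getElem?_eq_some_iff.1 hx).1

lemma towerLevel_eq_preimage {n i : ℕ} (hi : i < (tower n).length) :
    towerLevel n i = cell n ⁻¹' {(tower n)[i]} :=
  ext fun x => by simp [towerLevel, List.getElem?_eq_getElem hi, eq_comm]

lemma measurableSet_towerLevel (n i : ℕ) : MeasurableSet (towerLevel n i) :=
  measurable_cell n {p | (tower n)[i]? = some p}.to_countable.measurableSet

lemma lt_two_pow_of_mem_tower {n : ℕ} {p : ℕ × ℕ} (hp : p ∈ tower n) : p.1 < 2 ^ n ∧ p.2 < 2 ^ n :=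
  mem_corner_cons_tower_iff.1 (List.mem_cons_of_mem _ hp)

lemma measureReal_towerLevel {n i : ℕ} (hi : i < (tower n).length) :
    volume.real (towerLevel n i) = 1 / 4 ^ n := by
  obtain ⟨h1, h2⟩ := lt_two_pow_of_mem_tower (List.getElem_mem hi)
  rw [towerLevel_eq_preimage hi, measureReal_cell_preimage h1 h2]

lemma disjoint_towerLevel {n i j : ℕ} (hij : i ≠ j) :
    Disjoint (towerLevel n i) (towerLevel n j) :=
  Set.disjoint_left.2 fun _ hi hj => hij <|
    (List.getElem?_inj (lt_length_of_mem_towerLevel hi) (nodup_corner_cons_tower n).of_cons).1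
      (hi.trans hj.symm)

lemma towerLevel_succ_subset {n i k : ℕ} {a b : Bool} (hi : i < (tower n).length)
    (hk : (tower (n + 1))[k]? = ((tower n).map (quarter a b))[i]?) :
    towerLevel (n + 1) k ⊆ towerLevel n i := fun x hx => by
  rw [towerLevel, mem_ofPred_eq, hk, List.getElem?_map, List.getElem?_eq_getElem hi,
    Option.map_some, Option.some_inj] at hx
  rw [towerLevel_eq_preimage hi]
  exact cell_eq_of_cell_succ_eq_quarter hx.symm

lemma first_towerLevel_subset {n i : ℕ} (hi : i < (tower n).length) :
    towerLevel (n + 1) i ⊆ towerLevel n i :=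
  towerLevel_succ_subset hi (List.getElem?_append_left (by simpa using hi))

lemma second_towerLevel_subset {n i : ℕ} (hi : i < (tower n).length) :
    towerLevel (n + 1) ((tower n).length + i) ⊆ towerLevel n i :=
  towerLevel_succ_subset (a := true) (b := true) hi <| by
    rw [tower, List.getElem?_append_right (by simp), List.getElem?_append_left (by simpa using hi)]
    simp

lemma third_towerLevel_subset {n i : ℕ} (hi : i < (tower n).length) :
    towerLevel (n + 1) (2 * (tower n).length + 1 + i) ⊆ towerLevel n i :=
  towerLevel_succ_subset (a := false) (b := false) hi <| by
    have hsub : 2 * (tower n).length + 1 + i - (tower n).length - (tower n).length = i + 1 := by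
      omega
    rw [tower, List.getElem?_append_right (by simp; omega),
      List.getElem?_append_right (by simp; omega), List.length_map, List.length_map, hsub,
      List.getElem?_cons_succ, List.getElem?_append_left (by simpa using hi)]

lemma tendsto_length_tower_mul :
    Tendsto (fun n => ((tower n).length : ℝ) * (1 / 4 ^ n)) atTop (nhds 1) := by
  have hlen (n : ℕ) : ((tower n).length : ℝ) = 4 ^ n - 1 :=
    eq_sub_of_add_eq (by exact_mod_cast length_tower_add_one n)
  have heq (n : ℕ) : ((tower n).length : ℝ) * (1 / 4 ^ n) = 1 - (1 / 4 : ℝ) ^ n := by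
    rw [hlen, mul_one_div, sub_div, div_self (by positivity), one_div_pow]
  simpa only [heq, sub_zero] using tendsto_const_nhds.sub
    (tendsto_pow_atTop_nhds_zero_of_lt_one (by norm_num : (0 : ℝ) ≤ 1 / 4) (by norm_num))

section Limit

variable {U : T2 → T2}

lemma preimage_towerLevel_ae_eq (hU : MeasurePreserving U volume volume)
    (hlim : ∀ᵐ x ∂(volume : Measure T2), ∃ N : ℕ, ∀ n, N ≤ n → chaconU n x = U x) {n i : ℕ}
    (hi : i + 1 < (tower n).length) :
    U ⁻¹' towerLevel n (i + 1) =ᵐ[volume] towerLevel n i := by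
  obtain _ | n := n
  · simp [tower] at hi
  have hsub : towerLevel (n + 1) i ≤ᵐ[volume] U ⁻¹' towerLevel (n + 1) (i + 1) := by
    filter_upwards [hlim] with x ⟨N, hN⟩ hx
    have hi' := lt_length_of_mem_towerLevel hx
    obtain ⟨h1, h2⟩ := lt_two_pow_of_mem_tower (List.getElem_mem hi)
    change x ∈ towerLevel (n + 1) i at hx
    change U x ∈ towerLevel (n + 1) (i + 1)
    rw [towerLevel_eq_preimage hi', mem_preimage, mem_singleton_iff] at hx
    rw [towerLevel_eq_preimage hi, mem_preimage, mem_singleton_iff,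
      ← hN _ (le_max_left N (n + 1)),
      (isChain_carries_tower n).getElem i hi _ (le_max_right N (n + 1)) x hx, ← hx,
      cell_add_disp h1 h2]
  refine (ae_eq_of_ae_subset_of_measure_ge hsub (le_of_eq ?_)
    (measurableSet_towerLevel _ _).nullMeasurableSet (measure_ne_top _ _)).symm
  rw [hU.measure_preimage (measurableSet_towerLevel _ _).nullMeasurableSet,
    ← measureReal_eq_measureReal_iff, measureReal_towerLevel hi,
    measureReal_towerLevel (by omega)]

/-- The towers over which the limit map is constructed by cutting and stacking. -/
def chaconTower (hU : MeasurePreserving U volume volume)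
    (hlim : ∀ᵐ x ∂(volume : Measure T2), ∃ N : ℕ, ∀ n, N ≤ n → chaconU n x = U x) :
    ChaconTower volume U where
  height n := (tower n).length
  width n := 1 / 4 ^ n
  level := towerLevel
  filtration := dyadicFiltration
  measurePreserving := hU
  measurableSet_level := measurableSet_towerLevel
  measureReal_level := measureReal_towerLevel
  disjoint_level := disjoint_towerLevel
  preimage_level := preimage_towerLevel_ae_eq hU hlim
  first_level_subset := first_towerLevel_subset
  second_level_subset := second_towerLevel_subset
  third_level_subset := third_towerLevel_subset
  height_lt_height_succ n := by rw [length_tower_succ]; omega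
  width_le_width_succ n := le_of_eq (by ring)
  tendsto_height_mul_width := tendsto_length_tower_mul
  mem_of_mem_level hA x y hx hy hxA :=
    mem_of_measurableSet_dyadicFiltration hA (Option.some_injective _ (hx.symm.trans hy)) hxA
  iSup_filtration := iSup_dyadicFiltration

end Limit

lemma IsAutomorphism.measurePreserving {U : T2 → T2} (hU : IsAutomorphism U) :
    MeasurePreserving U volume volume := by
  obtain ⟨hmeas, -, -, -, -, hvol⟩ := hU
  exact ⟨hmeas, Measure.ext fun A hA => by rw [Measure.map_apply hmeas hA, hvol A hA]⟩

/-- The a.e. limit `U` of the Chacon-type maps is weakly mixing. -/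
theorem chacon_weakly_mixing (U : T2 → T2)
    (hU : IsAutomorphism U)
    (hlim : ∀ᵐ x ∂(volume : Measure T2), ∃ N : ℕ, ∀ n, N ≤ n → chaconU n x = U x) :
    ∀ A B : Set T2, MeasurableSet A → MeasurableSet B →
      Tendsto
        (fun n : ℕ => (1 / n : ℝ) *
          ∑ j ∈ Finset.range n,
            ((volume (U^[j] ⁻¹' A ∩ B)).toReal - (volume A).toReal * (volume B).toReal) ^ 2)
        atTop (nhds 0) := by
  intro A B hA hB
  have hprod : Ergodic (Prod.map U U) (volume.prod volume) :=
    (chaconTower hU.measurePreserving hlim).ergodic_prodMap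
  simpa only [one_div, Measure.real] using tendsto_average_sq_sub_of_ergodic_prodMap hprod hA hB

end
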